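/- arXiv:2406.06214 — 3 statements merged into one kernel-verified Lean document; each statement's English description precedes it below -/
import Mathlib

section
/- For every real number c > 0 there exists a unique representation basis A of the integers such that A(-x,x) > c·log x for all sufficiently large real numbers x. -/
open Filter Set

/-- `repCount A n` is the number of representations of `n` as `a + a'` with
`a ≤ a'` and `a, a' ∈ A`. -/
noncomputable def repCount (A : Set ℤ) (n : ℤ) : ℕ :=
  {p : ℤ × ℤ | p.1 ∈ A ∧ p.2 ∈ A ∧ p.1 ≤ p.2 ∧ p.1 + p.2 = n}.ncard

/-- `A` is a unique representation basis of `ℤ` if `r_A(n) = 1` for all `n`. -/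
def IsUniqueRepBasis (A : Set ℤ) : Prop := ∀ n : ℤ, repCount A n = 1

/-- `countIn A y x` is the number of elements of `A` in the real interval `[y, x]`. -/
noncomputable def countIn (A : Set ℤ) (y x : ℝ) : ℕ :=
  {a : ℤ | a ∈ A ∧ y ≤ (a : ℝ) ∧ (a : ℝ) ≤ x}.ncard

/-- Sidon property for a set of integers. -/
def SidonZ (A : Set ℤ) : Prop :=
  ∀ x ∈ A, ∀ y ∈ A, ∀ z ∈ A, ∀ w ∈ A, x + y = z + w → (x = z ∧ y = w) ∨ (x = w ∧ y = z)

/-- Every element outside a bad set keeps the Sidon property. -/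
lemma sidon_extend (A : Finset ℤ) (hA : SidonZ A) (n b : ℤ)
    (hn : ∀ x ∈ A, ∀ y ∈ A, x + y ≠ n)
    (H : ∀ g : ℤ, g ≠ 0 → |g| ≤ 4 → ∀ s ∈ insert 0 (insert n A), ∀ t ∈ insert 0 (insert n A),
      ∀ u ∈ insert 0 (insert n A), ∀ v ∈ insert 0 (insert n A), g * b ≠ s + t - u - v) :
    SidonZ (insert b (insert (n - b) A) : Finset ℤ) := by
  have key : ∀ x ∈ (insert b (insert (n - b) A) : Finset ℤ), ∃ α β : ℤ, x = α * b + β ∧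
      β ∈ insert 0 (insert n A) ∧ ((α = 0 ∧ β ∈ A) ∨ (α = 1 ∧ β = 0) ∨ (α = -1 ∧ β = n)) := by
    intro x hx
    simp only [Finset.mem_insert] at hx
    rcases hx with rfl | rfl | hx
    · exact ⟨1, 0, by ring, by simp, by simp⟩
    · exact ⟨-1, n, by ring, by simp, by simp⟩
    · exact ⟨0, x, by ring, by simp [hx], by simp [hx]⟩
  intro x hx y hy z hz w hw h
  obtain ⟨a1, b1, e1, m1, c1⟩ := key x hx
  obtain ⟨a2, b2, e2, m2, c2⟩ := key y hy
  obtain ⟨a3, b3, e3, m3, c3⟩ := key z hz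
  obtain ⟨a4, b4, e4, m4, c4⟩ := key w hw
  have hg : a1 + a2 - a3 - a4 = 0 := by
    by_contra hne
    refine H _ hne ?_ b3 m3 b4 m4 b1 m1 b2 m2 ?_
    · rw [abs_le]; omega
    · subst e1 e2 e3 e4; linear_combination h
  clear H key hx hy hz hw m1 m2 m3 m4
  rcases c1 with ⟨rfl, c1⟩ | ⟨rfl, c1⟩ | ⟨rfl, c1⟩ <;>
  rcases c2 with ⟨rfl, c2⟩ | ⟨rfl, c2⟩ | ⟨rfl, c2⟩ <;>
  rcases c3 with ⟨rfl, c3⟩ | ⟨rfl, c3⟩ | ⟨rfl, c3⟩ <;>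
  rcases c4 with ⟨rfl, c4⟩ | ⟨rfl, c4⟩ | ⟨rfl, c4⟩ <;>
  first
  | (exfalso; revert hg; norm_num; done)
  | omega
  | (exfalso; exact hn _ c1 _ c2 (by omega))
  | (exfalso; exact hn _ c3 _ c4 (by omega))
  | (have := hA _ c1 _ c2 _ c3 _ c4 (by omega); omega)

lemma exists_good (S : Finset ℤ) (N : ℕ) (hN : 8 * S.card ^ 4 < N) :
    ∃ b : ℤ, 1 ≤ b ∧ b ≤ N ∧ ∀ g : ℤ, g ≠ 0 → |g| ≤ 4 → ∀ s ∈ S, ∀ t ∈ S,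
      ∀ u ∈ S, ∀ v ∈ S, g * b ≠ s + t - u - v := by
  classical
  let G : Finset ℤ := (Finset.Icc (-4) 4).erase 0
  let F : Finset ℤ := (G ×ˢ S ×ˢ S ×ˢ S ×ˢ S).image
    (fun p => (p.2.1 + p.2.2.1 - p.2.2.2.1 - p.2.2.2.2) / p.1)
  have hG : G.card = 8 := by decide
  have hF : F.card ≤ 8 * S.card ^ 4 := by
    refine Finset.card_image_le.trans ?_
    simp only [Finset.card_product, hG]
    apply le_of_eq; ring
  have hlt : F.card < (Finset.Icc (1 : ℤ) N).card := by
    rw [Int.card_Icc]; omega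
  obtain ⟨b, hb, hbF⟩ := Finset.exists_mem_notMem_of_card_lt_card hlt
  rw [Finset.mem_Icc] at hb
  refine ⟨b, hb.1, hb.2, ?_⟩
  intro g hg hg4 s hs t ht u hu v hv h
  apply hbF
  refine Finset.mem_image.2 ⟨(g, s, t, u, v), ?_, ?_⟩
  · simp only [Finset.mem_product]
    refine ⟨?_, hs, ht, hu, hv⟩
    rw [abs_le] at hg4
    exact Finset.mem_erase.2 ⟨hg, Finset.mem_Icc.2 hg4⟩
  · simp only [← h]
    exact Int.mul_ediv_cancel_left b hg

/-- An enumeration of the integers. -/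
def enumZ (j : ℕ) : ℤ := if j % 2 = 0 then (j / 2 : ℕ) else -((j + 1) / 2 : ℕ)

lemma enumZ_abs (j : ℕ) : |enumZ j| ≤ j := by
  unfold enumZ; rw [abs_le]; split_ifs <;> omega

lemma enumZ_inj : Function.Injective enumZ := by
  intro i j h
  unfold enumZ at h; split_ifs at h <;> omega

lemma enumZ_surj (n : ℤ) : ∃ j, enumZ j = n := by
  rcases le_or_gt 0 n with h | h
  · refine ⟨2 * n.toNat, ?_⟩
    unfold enumZ; split_ifs <;> omega
  · refine ⟨2 * (-n).toNat - 1, ?_⟩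
    unfold enumZ; split_ifs <;> omega

/-- Invariant of the greedy construction. -/
def GreedyInv (k : ℕ) (A : Finset ℤ) : Prop :=
  SidonZ A ∧ A.card = 2 * k ∧ (∀ a ∈ A, |a| ≤ 200 * (k : ℤ) ^ 4) ∧
    ∀ j < k, ∃ x ∈ A, ∃ y ∈ A, x + y = enumZ j

lemma inv_step (k : ℕ) (A : Finset ℤ) (h : GreedyInv k A) : ∃ A', A ⊆ A' ∧ GreedyInv (k + 1) A' := by
  classical
  obtain ⟨hS, hc, hB, hj⟩ := h
  have hex : ∃ j, j ≤ 4 * k ^ 2 ∧ ∀ x ∈ A, ∀ y ∈ A, x + y ≠ enumZ j := by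
    let T := (A ×ˢ A).image (fun p => p.1 + p.2)
    have hT : T.card ≤ 4 * k ^ 2 := by
      refine Finset.card_image_le.trans ?_
      rw [Finset.card_product, hc]; apply le_of_eq; ring
    have hlt : T.card < ((Finset.range (4 * k ^ 2 + 1)).image enumZ).card := by
      rw [Finset.card_image_of_injective _ enumZ_inj, Finset.card_range]; omega
    obtain ⟨n, hn, hnT⟩ := Finset.exists_mem_notMem_of_card_lt_card hlt
    obtain ⟨j, hj, rfl⟩ := Finset.mem_image.1 hn
    refine ⟨j, by have := Finset.mem_range.1 hj; omega, ?_⟩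
    intro x hx y hy hxy
    exact hnT (Finset.mem_image.2 ⟨(x, y), Finset.mem_product.2 ⟨hx, hy⟩, hxy⟩)
  have hspec := Nat.find_spec hex
  have hmin : ∀ m, m < Nat.find hex → _ := fun m hm => Nat.find_min hex hm
  generalize Nat.find hex = j at hspec hmin
  obtain ⟨hjk, hn⟩ := hspec
  have hjn := enumZ_abs j
  generalize hnj : enumZ j = n at *
  have hScard : (insert 0 (insert n A)).card ≤ 2 * k + 2 := by
    have h1 := Finset.card_insert_le (0 : ℤ) (insert n A)
    have h2 := Finset.card_insert_le n A
    omega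
  have hN : 8 * (insert 0 (insert n A)).card ^ 4 < 8 * (2 * k + 2) ^ 4 + 1 := by
    have := Nat.pow_le_pow_left hScard 4
    omega
  obtain ⟨b, hb1, hbN, H⟩ := exists_good _ _ hN
  have m0 : (0 : ℤ) ∈ insert 0 (insert n A) := by simp
  have mn : n ∈ insert 0 (insert n A) := by simp
  have mA : ∀ a ∈ A, a ∈ insert 0 (insert n A) := fun a ha => by simp [ha]
  have hbA : b ∉ A := fun hb =>
    H 1 (by norm_num) (by norm_num) b (mA b hb) 0 m0 0 m0 0 m0 (by ring)
  have hnbA : n - b ∉ A := fun hb =>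
    H 1 (by norm_num) (by norm_num) n mn 0 m0 (n - b) (mA _ hb) 0 m0 (by ring)
  have hbne : b ≠ n - b := fun hb =>
    H 2 (by norm_num) (by norm_num) n mn 0 m0 0 m0 0 m0 (by linarith)
  push_cast at hbN
  have hjk' : (j : ℤ) ≤ 4 * (k : ℤ) ^ 2 := by exact_mod_cast hjk
  have hk0 : (0 : ℤ) ≤ k := by positivity
  have hk4 : 4 * (k : ℤ) ^ 2 + (8 * (2 * k + 2) ^ 4 + 1) ≤ 200 * ((k : ℤ) + 1) ^ 4 := by
    nlinarith [pow_nonneg hk0 2, pow_nonneg hk0 3, pow_nonneg hk0 4]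
  have hjn2 := abs_le.1 hjn
  refine ⟨insert b (insert (n - b) A), ?_, sidon_extend A hS n b hn H, ?_, ?_, ?_⟩
  · intro a ha; simp [ha]
  · rw [Finset.card_insert_of_notMem, Finset.card_insert_of_notMem hnbA, hc]
    · ring
    · simp [hbne, hbA]
  · intro a ha
    push_cast
    have hk2 : 0 ≤ (k : ℤ) ^ 2 := by positivity
    simp only [Finset.mem_insert] at ha
    rcases ha with rfl | rfl | ha
    · rw [abs_le]; constructor <;> linarith
    · rw [abs_le]; constructor <;> linarith
    · refine (hB a ha).trans ?_
      gcongr; linarith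
  · intro i hi
    rcases eq_or_ne i j with rfl | hij
    · exact ⟨b, by simp, n - b, by simp, by rw [hnj]; ring⟩
    · have hkj : k ≤ j := by
        by_contra hlt
        obtain ⟨x, hx, y, hy, hxy⟩ := hj j (by omega)
        exact hn x hx y hy (hxy.trans hnj)
      have : ∃ x ∈ A, ∃ y ∈ A, x + y = enumZ i := by
        by_cases hik : i < k
        · exact hj i hik
        · have hij : i < j := by omega
          have h3 := hmin i hij
          by_contra hcon
          push Not at hcon
          exact h3 ⟨by omega, hcon⟩
      obtain ⟨x, hx, y, hy, hxy⟩ := this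
      exact ⟨x, by simp [hx], y, by simp [hy], hxy⟩

lemma exists_seq : ∃ A : ℕ → Finset ℤ, (∀ k, GreedyInv k (A k)) ∧ ∀ k, A k ⊆ A (k + 1) := by
  have h0 : GreedyInv 0 ∅ := by
    refine ⟨?_, by simp, by simp, by simp⟩
    intro x hx; simp at hx
  choose f hf1 hf2 using inv_step
  let g : (k : ℕ) → {A : Finset ℤ // GreedyInv k A} := fun k =>
    Nat.rec ⟨∅, h0⟩ (fun k A => ⟨f k A.1 A.2, hf2 k A.1 A.2⟩) k
  exact ⟨fun k => (g k).1, fun k => (g k).2, fun k => hf1 k (g k).1 (g k).2⟩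

lemma log_growth (c : ℝ) (hc : 0 < c) :
    ∀ᶠ x : ℝ in atTop, 200 * (c * Real.log x + 1) ^ 4 ≤ x := by
  have h1 : Tendsto Real.log atTop atTop := Real.tendsto_log_atTop
  have h2 : ∀ᶠ x : ℝ in atTop, ‖Real.log x ^ 4‖ ≤ (1 / (200 * (c + 1) ^ 4)) * ‖x‖ :=
    (Real.isLittleO_pow_log_id_atTop (n := 4)).bound (by positivity)
  filter_upwards [h2, h1.eventually_ge_atTop 1, eventually_gt_atTop 0] with x hx hl hx0
  rw [Real.norm_of_nonneg (by positivity), Real.norm_of_nonneg hx0.le] at hx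
  calc 200 * (c * Real.log x + 1) ^ 4 ≤ 200 * ((c + 1) * Real.log x) ^ 4 := by
        gcongr; nlinarith
    _ = 200 * (c + 1) ^ 4 * Real.log x ^ 4 := by ring
    _ ≤ 200 * (c + 1) ^ 4 * ((1 / (200 * (c + 1) ^ 4)) * x) := by gcongr
    _ = x := by field_simp

/-- For every `c > 0` there exists a unique representation basis `A` such that
`A(-x,x) > c log x` for all sufficiently large real `x`. -/
theorem exists_urb_gt_const_mul_log (c : ℝ) (hc : 0 < c) :
    ∃ A : Set ℤ, IsUniqueRepBasis A ∧
      ∀ᶠ x : ℝ in atTop, c * Real.log x < (countIn A (-x) x : ℝ) := by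
  obtain ⟨A, hI, hsub⟩ := exists_seq
  have hmono : Monotone A := monotone_nat_of_le_succ hsub
  refine ⟨{a | ∃ k, a ∈ A k}, ?_, ?_⟩
  · intro n
    obtain ⟨j, hj⟩ := enumZ_surj n
    obtain ⟨x, hx, y, hy, hxy⟩ := (hI (j + 1)).2.2.2 j (by omega)
    unfold repCount
    rw [Set.ncard_eq_one]
    refine ⟨(min x y, max x y), ?_⟩
    ext ⟨p, q⟩
    simp only [Set.mem_ofPred_eq, Set.mem_singleton_iff, Prod.mk.injEq]
    constructor
    · rintro ⟨⟨k1, h1⟩, ⟨k2, h2⟩, hpq, hs⟩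
      set K := max (j + 1) (max k1 k2) with hK
      have e1 : A (j + 1) ⊆ A K := hmono (by omega)
      have e2 : A k1 ⊆ A K := hmono (by omega)
      have e3 : A k2 ⊆ A K := hmono (by omega)
      have := (hI K).1 p (e2 h1) q (e3 h2) x (e1 hx) y (e1 hy) (by omega)
      omega
    · rintro ⟨rfl, rfl⟩
      refine ⟨⟨j + 1, ?_⟩, ⟨j + 1, ?_⟩, by omega, by omega⟩
      · rcases min_choice x y with h | h <;> rw [h] <;> assumption
      · rcases max_choice x y with h | h <;> rw [h] <;> assumption
  · filter_upwards [log_growth c hc, eventually_ge_atTop 1] with x hx hx1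
    have hl : 0 ≤ c * Real.log x := mul_nonneg hc.le (Real.log_nonneg hx1)
    set k := ⌊c * Real.log x⌋₊ + 1 with hk
    have hk1 : c * Real.log x < k := by rw [hk]; push_cast; exact Nat.lt_floor_add_one _
    have hk2 : (k : ℝ) ≤ c * Real.log x + 1 := by
      rw [hk]; push_cast; linarith [Nat.floor_le hl]
    have hkx : 200 * (k : ℝ) ^ 4 ≤ x := le_trans (by gcongr) hx
    have hle : 2 * k ≤ countIn {a | ∃ k, a ∈ A k} (-x) x := by
      rw [← (hI k).2.1, ← Set.ncard_coe_finset]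
      apply Set.ncard_le_ncard
      · intro a ha
        have h1 := (hI k).2.2.1 a ha
        have h2 : |(a : ℝ)| ≤ 200 * (k : ℝ) ^ 4 := by exact_mod_cast h1
        have h3 := abs_le.1 (h2.trans hkx)
        exact ⟨⟨k, ha⟩, h3.1, h3.2⟩
      · refine (Set.finite_Icc ⌈-x⌉ ⌊x⌋).subset ?_
        rintro a ⟨-, h1, h2⟩
        exact ⟨Int.ceil_le.2 h1, Int.le_floor.2 h2⟩
    have hle' : (2 * k : ℝ) ≤ (countIn {a | ∃ k, a ∈ A k} (-x) x : ℝ) := by exact_mod_cast hle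
    have : (0 : ℝ) ≤ k := by positivity
    linarith
end

section
/- For every δ > 0 there exists n_δ such that for all integers n > n_δ, min_{1 ≤ ℓ ≤ n} A(−ℓn, ℓn)/√(ℓn/log(ℓn)) < 4√7 + δ holds for every unique representation basis A of the integers. -/
open Filter Set

theorem sidon_of_urb {A : Set ℤ} (hA : IsUniqueRepBasis A) {a b c d : ℤ}
    (ha : a ∈ A) (hb : b ∈ A) (hc : c ∈ A) (hd : d ∈ A) (hab : a ≠ b)
    (h : a - b = c - d) : a = c ∧ b = d := by
  have h1 := hA (a + d)
  unfold repCount at h1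
  obtain ⟨⟨x, y⟩, hxy⟩ := Set.ncard_eq_one.1 h1
  have key : ∀ u v : ℤ, u ∈ A → v ∈ A → u + v = a + d →
      (u = x ∧ v = y) ∨ (u = y ∧ v = x) := by
    intro u v hu hv huv
    rcases le_total u v with h2 | h2
    · have : ((u, v) : ℤ × ℤ) ∈ ({(x, y)} : Set (ℤ × ℤ)) := by
        rw [← hxy]; exact ⟨hu, hv, h2, huv⟩
      simp at this
      exact Or.inl this
    · have : ((v, u) : ℤ × ℤ) ∈ ({(x, y)} : Set (ℤ × ℤ)) := by
        rw [← hxy]; exact ⟨hv, hu, h2, by simp; omega⟩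
      simp at this
      exact Or.inr ⟨this.2, this.1⟩
  have k1 := key a d ha hd rfl
  have k2 := key b c hb hc (by omega)
  omega

theorem pairs_card_le {A : Set ℤ} (hA : IsUniqueRepBasis A) {ι : Type*} (m : ℕ)
    (X : Finset ι) (f : ι → ℤ × ℤ) (hf : Set.InjOn f X)
    (h : ∀ i ∈ X, (f i).1 ∈ A ∧ (f i).2 ∈ A ∧ (f i).1 ≠ (f i).2 ∧
      -(m : ℤ) ≤ (f i).1 - (f i).2 ∧ (f i).1 - (f i).2 ≤ m) : X.card ≤ 2 * m := by
  have hc : ((Finset.Icc (-(m : ℤ)) m).erase 0).card = 2 * m := by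
    rw [Finset.card_erase_of_mem (by simp), Int.card_Icc]; omega
  rw [← hc]
  apply Finset.card_le_card_of_injOn (fun i => (f i).1 - (f i).2)
  · intro i hi
    have := h i hi
    simp only [Finset.coe_erase, Finset.coe_Icc, Set.mem_sdiff, Set.mem_Icc, Set.mem_singleton_iff]
    omega
  · intro i hi j hj hij
    have h1 := h i hi
    have h2 := h j hj
    have := sidon_of_urb hA h1.1 h1.2.1 h2.1 h2.2.1 h1.2.2.1 hij
    exact hf hi hj (Prod.ext this.1 this.2)

open Classical in
noncomputable def blk (A : Set ℤ) (n : ℕ) (j : ℤ) : Finset ℤ :=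
  (Finset.Ico (j * n) ((j + 1) * n)).filter (· ∈ A)

theorem mem_blk {A : Set ℤ} {n : ℕ} {j a : ℤ} :
    a ∈ blk A n j ↔ (j * n ≤ a ∧ a < (j + 1) * n) ∧ a ∈ A := by
  simp [blk]

theorem blk_unique {A : Set ℤ} {n : ℕ} {j k a : ℤ} (h1 : a ∈ blk A n j) (h2 : a ∈ blk A n k) :
    j = k := by
  rw [mem_blk] at h1 h2
  have hn : (0 : ℤ) ≤ n := by positivity
  rcases lt_trichotomy j k with h | h | h
  · nlinarith
  · exact h
  · nlinarith

theorem sum_blk_sq_le {A : Set ℤ} (hA : IsUniqueRepBasis A) (n : ℕ) (hn0 : 0 < n) (J : Finset ℤ)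
    (hJ : ∀ j ∈ J, -(n : ℤ) ≤ j ∧ j < n) :
    ∑ j ∈ J, (blk A n j).card ^ 2 ≤ 4 * n := by
  classical
  have h1 : ∑ j ∈ J, (blk A n j).offDiag.card ≤ 2 * n := by
    rw [← Finset.card_sigma]
    apply pairs_card_le hA n _ (fun p => p.2)
    · rintro ⟨j, p⟩ hp ⟨k, q⟩ hq hpq
      simp only [Finset.coe_sigma, Set.mem_sigma_iff, Finset.mem_coe, Finset.mem_offDiag] at hp hq
      simp only at hpq
      subst hpq
      have := blk_unique hp.2.1 hq.2.1
      subst this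
      rfl
    · rintro ⟨j, p⟩ hp
      simp only [Finset.mem_sigma, Finset.mem_offDiag, mem_blk] at hp
      refine ⟨hp.2.1.2, hp.2.2.1.2, hp.2.2.2, ?_, ?_⟩ <;> dsimp only <;> nlinarith
  have hT : (J.biUnion (blk A n)).card = ∑ j ∈ J, (blk A n j).card := by
    apply Finset.card_biUnion
    intro j _ k _ hjk
    rw [Function.onFun, Finset.disjoint_left]
    intro a ha hb
    exact hjk (blk_unique ha hb)
  have h2 : (J.biUnion (blk A n)).offDiag.card ≤ 2 * (2 * n ^ 2) := by
    have hU : ∀ a ∈ J.biUnion (blk A n), a ∈ A ∧ -(n : ℤ) ^ 2 ≤ a ∧ a ≤ (n : ℤ) ^ 2 := by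
      intro a ha
      rw [Finset.mem_biUnion] at ha
      obtain ⟨j, hj, ha⟩ := ha
      rw [mem_blk] at ha
      have := hJ j hj
      have hn : (0 : ℤ) ≤ n := by positivity
      refine ⟨ha.2, ?_, ?_⟩ <;> nlinarith
    apply pairs_card_le hA (2 * n ^ 2) _ (fun p => p) (fun _ _ _ _ h => h)
    intro p hp
    rw [Finset.mem_offDiag] at hp
    have a1 := hU _ hp.1
    have a2 := hU _ hp.2.1
    push_cast
    refine ⟨a1.1, a2.1, hp.2.2, ?_, ?_⟩ <;> linarith
  rw [Finset.offDiag_card, hT] at h2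
  have h3 : ∑ j ∈ J, (blk A n j).card ≤ 2 * n := by
    by_contra hcon
    push Not at hcon
    generalize ∑ j ∈ J, (blk A n j).card = T at *
    have : T * T ≤ 4 * n ^ 2 + T := by omega
    have hT1 : T * (2 * n + 1) ≤ T * T := Nat.mul_le_mul_left _ hcon
    have hT2 : n * (2 * n + 1) ≤ n * T := Nat.mul_le_mul_left _ hcon
    nlinarith
  have h4 : ∀ j ∈ J, (blk A n j).card ^ 2 = (blk A n j).offDiag.card + (blk A n j).card := by
    intro j _
    rw [Finset.offDiag_card, sq]
    have := Nat.le_mul_self (blk A n j).card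
    omega
  rw [Finset.sum_congr rfl h4, Finset.sum_add_distrib]
  omega

theorem sum_D_sq {A : Set ℤ} (hA : IsUniqueRepBasis A) (n : ℕ) (hn0 : 0 < n) :
    ∑ i ∈ Finset.range n, ((blk A n i).card + (blk A n (-i - 1)).card) ^ 2 ≤ 8 * n := by
  classical
  have h := sum_blk_sq_le hA n hn0
    ((Finset.range n).image (fun i : ℕ => (i : ℤ)) ∪ (Finset.range n).image (fun i : ℕ => -(i : ℤ) - 1))
    (by
      intro j hj
      simp only [Finset.mem_union, Finset.mem_image, Finset.mem_range] at hj
      rcases hj with ⟨i, hi, rfl⟩ | ⟨i, hi, rfl⟩ <;> omega)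
  rw [Finset.sum_union, Finset.sum_image, Finset.sum_image, ← Finset.sum_add_distrib] at h
  · calc _ ≤ ∑ i ∈ Finset.range n, 2 * ((blk A n i).card ^ 2 + (blk A n (-i - 1)).card ^ 2) := by
          apply Finset.sum_le_sum
          intro i _
          exact add_sq_le
      _ ≤ _ := by rw [← Finset.mul_sum]; omega
  · intro a _ b _ hab
    simp only at hab; omega
  · intro a _ b _ hab
    simp only at hab; omega
  · rw [Finset.disjoint_left]
    intro a ha hb
    simp only [Finset.mem_image] at ha hb
    obtain ⟨i, _, rfl⟩ := ha
    obtain ⟨k, _, hk⟩ := hb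
    omega

theorem count_le {A : Set ℤ} (n l : ℕ) :
    countIn A (-((l : ℝ) * n)) ((l : ℝ) * n) ≤
      1 + ∑ i ∈ Finset.range l, ((blk A n i).card + (blk A n (-i - 1)).card) := by
  classical
  let C : ℕ → Finset ℤ := fun l => (Finset.Ico (-((l : ℤ) * n)) ((l : ℤ) * n)).filter (· ∈ A)
  have hC : ∀ l, (C l).card ≤
      ∑ i ∈ Finset.range l, ((blk A n i).card + (blk A n (-i - 1)).card) := by
    intro l
    induction l with
    | zero => simp [C]
    | succ l ih =>
      rw [Finset.sum_range_succ]
      have hsub : C (l + 1) ⊆ C l ∪ (blk A n l ∪ blk A n (-l - 1)) := by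
        intro a ha
        simp only [C, Finset.mem_filter, Finset.mem_Ico, Finset.mem_union, mem_blk] at ha ⊢
        push_cast at ha
        by_cases h1 : (l : ℤ) * n ≤ a
        · exact Or.inr (Or.inl ⟨⟨h1, ha.1.2⟩, ha.2⟩)
        · by_cases h2 : a < -((l : ℤ) * n)
          · refine Or.inr (Or.inr ⟨⟨?_, ?_⟩, ha.2⟩) <;> linarith [ha.1.1]
          · exact Or.inl ⟨⟨by linarith, by linarith⟩, ha.2⟩
      have e1 := Finset.card_le_card hsub
      have e2 := Finset.card_union_le (C l) (blk A n l ∪ blk A n (-l - 1))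
      have e3 := Finset.card_union_le (blk A n l) (blk A n (-l - 1))
      omega
  unfold countIn
  have hs : {a : ℤ | a ∈ A ∧ -((l : ℝ) * n) ≤ (a : ℝ) ∧ (a : ℝ) ≤ (l : ℝ) * n} ⊆
      ((insert ((l : ℤ) * n) (C l) : Finset ℤ) : Set ℤ) := by
    rintro a ⟨ha, h1, h2⟩
    have h1' : -((l : ℤ) * n) ≤ a := by exact_mod_cast h1
    have h2' : a ≤ (l : ℤ) * n := by exact_mod_cast h2
    simp only [Finset.mem_coe, Finset.mem_insert, C, Finset.mem_filter, Finset.mem_Ico]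
    rcases h2'.eq_or_lt with h | h
    · exact Or.inl h
    · exact Or.inr ⟨⟨h1', h⟩, ha⟩
  have e1 := Set.ncard_le_ncard hs (Finset.finite_toSet _)
  rw [Set.ncard_coe_finset] at e1
  have e2 := Finset.card_insert_le ((l : ℤ) * n) (C l)
  have := hC l
  omega

theorem abel_lower (D : ℕ → ℝ) (K : ℝ) (hK : 0 ≤ K) (n : ℕ)
    (h : ∀ l : ℕ, 1 ≤ l → l ≤ n → K * √(l : ℝ) ≤ ∑ i ∈ Finset.range l, D i) :
    (∑ i ∈ Finset.range n, D i) / √((n : ℝ) + 1)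
      + K / 2 * ∑ i ∈ Finset.range n, 1 / ((i : ℝ) + 2)
      ≤ ∑ i ∈ Finset.range n, D i * (1 / √((i : ℝ) + 1)) := by
  induction n with
  | zero => simp
  | succ n ih =>
    have ih' := ih (fun l h1 h2 => h l h1 (by omega))
    have hn := h (n + 1) (by omega) le_rfl
    rw [Finset.sum_range_succ (fun i : ℕ => 1 / ((i : ℝ) + 2)),
      Finset.sum_range_succ (fun i : ℕ => D i * (1 / √((i : ℝ) + 1)))]
    rw [Finset.sum_range_succ] at hn ⊢
    push_cast at hn ⊢
    set S := ∑ i ∈ Finset.range n, D i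
    set x := √((n : ℝ) + 1) with hx
    have h2 : (n : ℝ) + 1 + 1 = n + 2 := by ring
    rw [h2]
    set y := √((n : ℝ) + 2) with hy
    have hx0 : 0 < x := Real.sqrt_pos.2 (by positivity)
    have hxy : x ≤ y := Real.sqrt_le_sqrt (by linarith)
    have hy0 : 0 < y := by linarith
    have hx2 : x ^ 2 = n + 1 := Real.sq_sqrt (by positivity)
    have hy2 : y ^ 2 = n + 2 := Real.sq_sqrt (by positivity)
    have key : (S + D n) / y + K / 2 * (1 / ((n : ℝ) + 2)) ≤ (S + D n) / x := by
      rw [← hy2]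
      have a1 : 1 / (2 * y ^ 2) ≤ x * (1 / x - 1 / y) := by
        have : x * (1 / x - 1 / y) = (y - x) / y := by field_simp
        rw [this, div_le_div_iff₀ (by positivity) hy0]
        have : 1 = (y - x) * (y + x) := by nlinarith
        have : (y - x) * (y + x) ≤ (y - x) * (2 * y) := by
          apply mul_le_mul_of_nonneg_left <;> linarith
        nlinarith
      have a2 : 0 ≤ 1 / x - 1 / y := by
        have := one_div_le_one_div_of_le hx0 hxy
        linarith
      have a3 := mul_le_mul_of_nonneg_right hn a2
      have a4 := mul_le_mul_of_nonneg_left a1 hK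
      have e1 : (S + D n) / x - (S + D n) / y = (S + D n) * (1 / x - 1 / y) := by ring
      have e2 : K / 2 * (1 / y ^ 2) = K * (1 / (2 * y ^ 2)) := by field_simp
      rw [e2]
      nlinarith
    have e : (S + D n) / x = S / x + D n * (1 / x) := by ring
    linarith

theorem main_ineq (D : ℕ → ℝ) (hD : ∀ i, 0 ≤ D i) (n : ℕ) (hn : 10 ≤ Real.log n)
    (hsq : ∑ i ∈ Finset.range n, D i ^ 2 ≤ 8 * n)
    (h : ∀ l : ℕ, 1 ≤ l → l ≤ n → √(56 * n / Real.log n) * √(l : ℝ) ≤ 1 + ∑ i ∈ Finset.range l, D i) :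
    False := by
  set L := Real.log n
  set K := √(56 * n / L) with hKdef
  have hL0 : 0 < L := by linarith
  have hn0 : (0 : ℝ) < n := by
    rcases Nat.eq_zero_or_pos n with h0 | h0
    · simp only [L, h0] at hn; norm_num at hn
    · exact_mod_cast h0
  have hK2 : K ^ 2 = 56 * n / L := Real.sq_sqrt (by positivity)
  have hLn : L ≤ n / 2 := by
    have h1 : L = 2 * Real.log √(n : ℝ) := by rw [Real.log_sqrt hn0.le]; ring
    have h2 := Real.log_le_sub_one_of_pos (Real.sqrt_pos.2 hn0)
    have h3 := Real.sq_sqrt hn0.le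
    nlinarith [sq_nonneg (√(n : ℝ) - 2)]
  have hK10 : 10 ≤ K := by
    apply Real.le_sqrt_of_sq_le
    rw [le_div_iff₀ hL0]; linarith
  have h' : ∀ l : ℕ, 1 ≤ l → l ≤ n → (9 / 10 * K) * √(l : ℝ) ≤ ∑ i ∈ Finset.range l, D i := by
    intro l h1 h2
    have := h l h1 h2
    have hl : 1 ≤ √(l : ℝ) := by
      apply Real.le_sqrt_of_sq_le
      have : (1 : ℝ) ≤ l := by exact_mod_cast h1
      linarith
    nlinarith
  have hab := abel_lower D (9 / 10 * K) (by positivity) n h'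
  set H := ∑ i ∈ Finset.range n, 1 / ((i : ℝ) + 1) with hH
  have hH1 : H - 1 ≤ ∑ i ∈ Finset.range n, 1 / ((i : ℝ) + 2) := by
    have e1 := Finset.sum_range_succ (fun i : ℕ => 1 / ((i : ℝ) + 1)) n
    rw [Finset.sum_range_succ'] at e1
    have e2 : ∑ i ∈ Finset.range n, 1 / ((i : ℝ) + 2)
        = ∑ i ∈ Finset.range n, 1 / (((i + 1 : ℕ) : ℝ) + 1) := by
      apply Finset.sum_congr rfl
      intro i _
      push_cast
      ring
    rw [e2]
    have : 0 ≤ 1 / ((n : ℝ) + 1) := by positivity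
    simp only [Nat.cast_zero, zero_add, div_one] at e1
    linarith
  have hHL : L ≤ H := by
    have e1 := log_add_one_le_harmonic n
    have e2 : ((harmonic n : ℚ) : ℝ) = H := by
      rw [harmonic, hH]
      push_cast
      apply Finset.sum_congr rfl
      intro i _
      rw [one_div]
    have e3 : L ≤ Real.log ((n : ℝ) + 1) := Real.log_le_log hn0 (by linarith)
    push_cast at e1
    linarith
  have hS : 0 ≤ (∑ i ∈ Finset.range n, D i) / √((n : ℝ) + 1) :=
    div_nonneg (Finset.sum_nonneg fun i _ => hD i) (Real.sqrt_nonneg _)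
  have hcs := Finset.sum_mul_sq_le_sq_mul_sq (Finset.range n) D (fun i : ℕ => 1 / √((i : ℝ) + 1))
  have hsqs : ∑ i ∈ Finset.range n, (1 / √((i : ℝ) + 1)) ^ 2 = H := by
    apply Finset.sum_congr rfl
    intro i _
    rw [div_pow, Real.sq_sqrt (by positivity), one_pow]
  rw [hsqs] at hcs
  have hlow : 9 / 20 * K * (H - 1) ≤ ∑ i ∈ Finset.range n, D i * (1 / √((i : ℝ) + 1)) := by
    have : 9 / 20 * K * (H - 1) ≤ 9 / 20 * K * ∑ i ∈ Finset.range n, 1 / ((i : ℝ) + 2) :=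
      mul_le_mul_of_nonneg_left hH1 (by positivity)
    linarith
  have hlow2 := pow_le_pow_left₀ (mul_nonneg (by positivity) (by linarith)) hlow 2
  have hup : (9 / 20 * K * (H - 1)) ^ 2 ≤ 8 * n * H :=
    hlow2.trans (hcs.trans (mul_le_mul_of_nonneg_right hsq (by linarith)))
  have e : (9 / 20 * K * (H - 1)) ^ 2 = (81 / 400 * 56 * (H - 1) ^ 2 / L) * n := by
    rw [mul_pow, mul_pow, hK2]; ring
  rw [e] at hup
  have h5 : 81 / 400 * 56 * (H - 1) ^ 2 / L ≤ 8 * H := by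
    by_contra hc
    push Not at hc
    nlinarith
  rw [div_le_iff₀ hL0] at h5
  nlinarith

/-- For every `δ > 0` there exists `n_δ` such that for all `n > n_δ` and every
unique representation basis `A` there is `1 ≤ ℓ ≤ n` with
`A(−ℓn, ℓn)/√(ℓn/log(ℓn)) < 4√7 + δ`. -/
theorem exists_ell_lt_four_sqrt_seven_add (δ : ℝ) (hδ : 0 < δ) :
    ∃ nδ : ℕ, ∀ n : ℕ, nδ < n → ∀ A : Set ℤ, IsUniqueRepBasis A →
      ∃ ℓ : ℕ, 1 ≤ ℓ ∧ ℓ ≤ n ∧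
        (countIn A (-((ℓ : ℝ) * n)) ((ℓ : ℝ) * n) : ℝ) /
            Real.sqrt ((ℓ : ℝ) * n / Real.log ((ℓ : ℝ) * n)) <
          4 * Real.sqrt 7 + δ := by
  refine ⟨⌈Real.exp 10⌉₊, fun n hn A hA => ?_⟩
  by_contra hcon
  push Not at hcon
  have hn1 : Real.exp 10 ≤ n := (Nat.le_ceil _).trans (by exact_mod_cast hn.le)
  have hn0 : (0 : ℝ) < n := (Real.exp_pos _).trans_le hn1
  have hL : 10 ≤ Real.log n := (Real.le_log_iff_exp_le hn0).2 hn1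
  refine main_ineq (fun i => (((blk A n i).card + (blk A n (-i - 1)).card : ℕ) : ℝ))
    (fun i => by positivity) n hL (by exact_mod_cast sum_D_sq hA n (by omega)) ?_
  intro l h1 h2
  have hc := hcon l h1 h2
  have h3 : (countIn A (-((l : ℝ) * n)) ((l : ℝ) * n) : ℝ) ≤
      1 + ∑ i ∈ Finset.range l, (((blk A n i).card + (blk A n (-i - 1)).card : ℕ) : ℝ) := by
    exact_mod_cast count_le (A := A) n l
  refine le_trans ?_ h3
  have hl1 : (1 : ℝ) ≤ l := by exact_mod_cast h1
  have hl2 : (l : ℝ) ≤ n := by exact_mod_cast h2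
  have hlog : Real.log ((l : ℝ) * n) ≤ 2 * Real.log n := by
    rw [Real.log_mul (by positivity) (by positivity)]
    have := Real.log_le_log (by linarith) hl2
    linarith
  have hlog0 : 0 < Real.log ((l : ℝ) * n) := by
    rw [Real.log_mul (by positivity) (by positivity)]
    have := Real.log_nonneg hl1
    linarith
  have hpos : 0 < √((l : ℝ) * n / Real.log ((l : ℝ) * n)) := Real.sqrt_pos.2 (by positivity)
  rw [le_div_iff₀ hpos] at hc
  have h4 : 4 * √7 * √((l : ℝ) * n / Real.log ((l : ℝ) * n)) ≤
      (4 * √7 + δ) * √((l : ℝ) * n / Real.log ((l : ℝ) * n)) :=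
    mul_le_mul_of_nonneg_right (by linarith) hpos.le
  refine le_trans ?_ (h4.trans hc)
  have h5 : (4 : ℝ) * √7 = √112 := by
    rw [show (112 : ℝ) = 4 ^ 2 * 7 by norm_num, Real.sqrt_mul (by norm_num),
      Real.sqrt_sq (by norm_num)]
  rw [h5, ← Real.sqrt_mul (by positivity), ← Real.sqrt_mul (by positivity)]
  apply Real.sqrt_le_sqrt
  calc 56 * (n : ℝ) / Real.log n * l = 112 * (l * n / (2 * Real.log n)) := by
        field_simp; norm_num
    _ ≤ _ := by gcongr
end

section
/- Let A be a unique representation basis of the integers and let n be a positive integer. For each integer ℓ with 1 ≤ ℓ ≤ n, let N_ℓ be the number of elements of A in the interval ((ℓ−1)n, ℓn]. Then ∑_{1 ≤ ℓ ≤ n, N_ℓ ≥ 2} binom(N_ℓ, 2) < n. -/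
open Filter Set

lemma urb_sidon (A : Set ℤ) (hA : IsUniqueRepBasis A) {a b c d : ℤ} (ha : a ∈ A) (hb : b ∈ A)
    (hc : c ∈ A) (hd : d ∈ A) (h : a + b = c + d) : (a = c ∧ b = d) ∨ (a = d ∧ b = c) := by
  have h1 := hA (a + b)
  unfold repCount at h1
  obtain ⟨p, hp⟩ := Set.ncard_eq_one.1 h1
  have key : ∀ x y : ℤ, x ∈ A → y ∈ A → x + y = a + b → (min x y, max x y) = p := by
    intro x y hx hy hxy
    have : (min x y, max x y) ∈ ({p} : Set (ℤ × ℤ)) := by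
      rw [← hp]
      refine ⟨?_, ?_, ?_, ?_⟩
      · rcases min_choice x y with h | h <;> simp only [h] <;> assumption
      · rcases max_choice x y with h | h <;> simp only [h] <;> assumption
      · exact min_le_max
      · simpa [min_add_max] using hxy
    exact this
  have h2 := (key a b ha hb rfl).trans (key c d hc hd h.symm).symm
  rw [Prod.mk.injEq] at h2
  omega

/-- For a unique representation basis, the number of pairs of elements of `A`
within the blocks `((ℓ-1)n, ℓn]`, `1 ≤ ℓ ≤ n`, is less than `n`. -/
theorem urb_sum_choose_lt (A : Set ℤ) (hA : IsUniqueRepBasis A) (n : ℕ) (hn : 0 < n)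
    (N : ℕ → ℕ)
    (hN : ∀ ℓ : ℕ, N ℓ = {a : ℤ | a ∈ A ∧ ((ℓ : ℤ) - 1) * n < a ∧ a ≤ (ℓ : ℤ) * n}.ncard) :
    ∑ ℓ ∈ (Finset.Icc 1 n).filter (fun ℓ => 2 ≤ N ℓ), Nat.choose (N ℓ) 2 < n := by
  classical
  set F : ℕ → Finset ℤ := fun ℓ =>
    (Finset.Ioc (((ℓ : ℤ) - 1) * n) ((ℓ : ℤ) * n)).filter (· ∈ A) with hF
  have hNF : ∀ ℓ, N ℓ = (F ℓ).card := by
    intro ℓ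
    rw [hN, ← Set.ncard_coe_finset]
    congr 1
    ext a
    simp only [hF, Finset.coe_filter, Finset.mem_Ioc, Set.mem_setOf_eq]
    tauto
  have hmem : ∀ ℓ x, x ∈ F ℓ ↔ (((ℓ : ℤ) - 1) * n < x ∧ x ≤ (ℓ : ℤ) * n) ∧ x ∈ A := by
    intro ℓ x
    simp only [hF, Finset.mem_filter, Finset.mem_Ioc]
  have hcard : ((Finset.Icc 1 n).sigma (fun ℓ => (F ℓ).offDiag)).card
      ≤ ((Finset.Ioo (-(n : ℤ)) n).erase 0).card := by
    apply Finset.card_le_card_of_injOn (fun s => s.2.1 - s.2.2)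
    · rintro ⟨ℓ, x, y⟩ h
      simp only [Finset.mem_coe, Finset.mem_sigma, Finset.mem_offDiag, hmem] at h
      obtain ⟨-, ⟨⟨h1, h2⟩, -⟩, ⟨⟨h3, h4⟩, -⟩, h5⟩ := h
      simp only [Finset.mem_coe, Finset.mem_erase, Finset.mem_Ioo]
      refine ⟨by omega, by linarith, by linarith⟩
    · rintro ⟨ℓ, x, y⟩ h ⟨m, u, v⟩ h' he
      simp only [Finset.mem_coe, Finset.mem_sigma, Finset.mem_offDiag, hmem] at h h'
      obtain ⟨-, ⟨⟨h1, h2⟩, hx⟩, ⟨-, hy⟩, h5⟩ := h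
      obtain ⟨-, ⟨⟨k1, k2⟩, hu⟩, ⟨-, hv⟩, k5⟩ := h'
      simp only at he
      rcases urb_sidon A hA hx hv hu hy (by linarith) with ⟨e1, e2⟩ | ⟨e1, e2⟩
      · subst e1 e2
        have hn' : (0 : ℤ) < n := by exact_mod_cast hn
        have a1 : (ℓ : ℤ) - 1 < m := lt_of_mul_lt_mul_right (h1.trans_le k2) hn'.le
        have a2 : (m : ℤ) - 1 < ℓ := lt_of_mul_lt_mul_right (k1.trans_le h2) hn'.le
        have : ℓ = m := by omega
        subst this
        rfl
      · exact absurd e1 h5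
  rw [Finset.card_sigma, Finset.card_erase_of_mem (by simp; omega), Int.card_Ioo] at hcard
  have h2 : 2 * ∑ ℓ ∈ Finset.Icc 1 n, Nat.choose (N ℓ) 2
      = ∑ ℓ ∈ Finset.Icc 1 n, (F ℓ).offDiag.card := by
    rw [Finset.mul_sum]
    refine Finset.sum_congr rfl fun ℓ _ => ?_
    rw [Finset.offDiag_card, ← hNF, Nat.choose_two_right,
      Nat.mul_div_cancel' (Nat.even_mul_pred_self _).two_dvd, Nat.mul_sub_one]
  have h3 : ∑ ℓ ∈ (Finset.Icc 1 n).filter (fun ℓ => 2 ≤ N ℓ), Nat.choose (N ℓ) 2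
      ≤ ∑ ℓ ∈ Finset.Icc 1 n, Nat.choose (N ℓ) 2 :=
    Finset.sum_le_sum_of_subset (Finset.filter_subset _ _)
  omega
end
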